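/- Let F be a finite graph with at least one edge and let (H,T) be an F-saturated blueprint. Then every graph T+e obtained by adding an edge between two non-adjacent vertices of T, and every graph 2T+e obtained from the disjoint union of two copies of T by adding an edge with one endpoint in each copy, contains a connected component of F that is not contained in T. -/

import Mathlib

open SimpleGraph Filter Topology

/-- `H` (on `β`) is contained in `G` (on `α`): `G` has a subgraph isomorphic to `H`. -/
def Contains {α β : Type*} (G : SimpleGraph α) (H : SimpleGraph β) : Prop :=
  ∃ f : β ↪ α, ∀ a b : β, H.Adj a b → G.Adj (f a) (f b)

/-- `G` is `F`-saturated: `G` does not contain `F`, but adding any missing edge creates `F`. -/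
def SatSingle {γ α : Type*} (F : SimpleGraph γ) (G : SimpleGraph α) : Prop :=
  (¬ Contains G F) ∧
    ∀ u v : α, u ≠ v → ¬ G.Adj u v → Contains (G ⊔ SimpleGraph.fromEdgeSet {s(u, v)}) F

/-- The disjoint union of two graphs. -/
def disjUnionG {α β : Type*} (G : SimpleGraph α) (H : SimpleGraph β) : SimpleGraph (α ⊕ β) :=
  SimpleGraph.fromRel (fun x y =>
    match x, y with
    | Sum.inl a, Sum.inl b => G.Adj a b
    | Sum.inr a, Sum.inr b => H.Adj a b
    | _, _ => False)

/-- `H ∪ kT`: the disjoint union of `H` with `k` copies of `T`. -/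
def unionCopies {α β : Type*} (H : SimpleGraph α) (k : ℕ) (T : SimpleGraph β) :
    SimpleGraph (α ⊕ Fin k × β) :=
  SimpleGraph.fromRel (fun x y =>
    match x, y with
    | Sum.inl a, Sum.inl b => H.Adj a b
    | Sum.inr (i, a), Sum.inr (j, b) => i = j ∧ T.Adj a b
    | _, _ => False)

/-- `T` is a tree such that every graph `T+e` (obtained by adding an edge between two
non-adjacent vertices of `T`) and every graph `2T+e` (obtained from the disjoint union of two
copies of `T` by adding an edge with one endpoint in each copy) contains a connected component of
`F` that is not contained in `T`. -/
def GoodTree {nF : ℕ} (F : SimpleGraph (Fin nF)) (t : ℕ) (T : SimpleGraph (Fin t)) : Prop :=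
  T.IsTree ∧
  (∀ u v : Fin t, u ≠ v → ¬ T.Adj u v →
    ∃ c : F.ConnectedComponent, ¬ Contains T (SimpleGraph.induce c.supp F) ∧
      Contains (T ⊔ SimpleGraph.fromEdgeSet {s(u, v)}) (SimpleGraph.induce c.supp F)) ∧
  (∀ u v : Fin t,
    ∃ c : F.ConnectedComponent, ¬ Contains T (SimpleGraph.induce c.supp F) ∧
      Contains (disjUnionG T T ⊔ SimpleGraph.fromEdgeSet {s(Sum.inl u, Sum.inr v)})
        (SimpleGraph.induce c.supp F))

section UnionCopies

variable {α β : Type*} {H : SimpleGraph α} {T : SimpleGraph β} {k : ℕ}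

theorem unionCopies_adj_inl_inl {a b : α} :
    (unionCopies H k T).Adj (Sum.inl a) (Sum.inl b) ↔ H.Adj a b := by
  simp only [unionCopies, fromRel_adj, ne_eq, Sum.inl.injEq, H.adj_comm b a, or_self]
  exact ⟨And.right, fun h => ⟨h.ne, h⟩⟩

theorem unionCopies_adj_inr_inr {x y : Fin k × β} :
    (unionCopies H k T).Adj (Sum.inr x) (Sum.inr y) ↔ x.1 = y.1 ∧ T.Adj x.2 y.2 := by
  obtain ⟨i, a⟩ := x
  obtain ⟨j, b⟩ := y
  simp only [unionCopies, fromRel_adj, ne_eq, Sum.inr.injEq, Prod.mk.injEq, T.adj_comm b a,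
    eq_comm (a := j) (b := i), or_self]
  exact ⟨And.right, fun h => ⟨fun e => h.2.ne e.2, h⟩⟩

theorem not_unionCopies_adj_inl_inr {a : α} {y : Fin k × β} :
    ¬ (unionCopies H k T).Adj (Sum.inl a) (Sum.inr y) := by
  simp [unionCopies]

theorem not_unionCopies_adj_inr_inl {a : α} {y : Fin k × β} :
    ¬ (unionCopies H k T).Adj (Sum.inr y) (Sum.inl a) := by
  simp [unionCopies]

end UnionCopies

theorem disjUnionG_adj_inl_inl {α β : Type*} {G : SimpleGraph α} {H : SimpleGraph β} {a b : α} :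
    (disjUnionG G H).Adj (Sum.inl a) (Sum.inl b) ↔ G.Adj a b := by
  simp only [disjUnionG, fromRel_adj, ne_eq, Sum.inl.injEq, G.adj_comm b a, or_self]
  exact ⟨And.right, fun h => ⟨h.ne, h⟩⟩

theorem disjUnionG_adj_inr_inr {α β : Type*} {G : SimpleGraph α} {H : SimpleGraph β} {a b : β} :
    (disjUnionG G H).Adj (Sum.inr a) (Sum.inr b) ↔ H.Adj a b := by
  simp only [disjUnionG, fromRel_adj, ne_eq, Sum.inr.injEq, H.adj_comm b a, or_self]
  exact ⟨And.right, fun h => ⟨h.ne, h⟩⟩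

/-- Suppose `G` agrees with `H ∪ kT` outside a union `D` of components of `G`. If `G` contains `F`
but `H ∪ (k + |F|)T` does not, then `D` contains a component of `F` that is not contained in `T`:
otherwise the components of `F` inside `D` could be moved to the additional copies of `T`. -/
theorem exists_component_contains_of_contains {n k : ℕ} {α β δ : Type*} {F : SimpleGraph (Fin n)}
    {H : SimpleGraph α} {T : SimpleGraph β} {G : SimpleGraph (α ⊕ Fin k × β)} {D : SimpleGraph δ}
    (ι : δ → α ⊕ Fin k × β)
    (hD : ∀ x y, G.Adj (ι x) (ι y) → D.Adj x y)
    (hclosed : ∀ x y, G.Adj (ι x) y → y ∈ Set.range ι)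
    (hout : ∀ x y, x ∉ Set.range ι → G.Adj x y → (unionCopies H k T).Adj x y)
    (hG : Contains G F) (hnot : ¬ Contains (unionCopies H (k + n) T) F) :
    ∃ c : F.ConnectedComponent, ¬ Contains T (SimpleGraph.induce c.supp F) ∧
      Contains D (SimpleGraph.induce c.supp F) := by
  classical
  obtain ⟨φ, hφ⟩ := hG
  have hadj : ∀ x y, F.Adj x y → (φ x ∈ Set.range ι ↔ φ y ∈ Set.range ι) := by
    refine fun x y h => ⟨?_, ?_⟩
    · rintro ⟨d, hd⟩
      exact hclosed d _ (hd ▸ hφ x y h)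
    · rintro ⟨d, hd⟩
      exact hclosed d _ (hd ▸ hφ y x h.symm)
  have hreach : ∀ x y, F.Reachable x y → (φ x ∈ Set.range ι ↔ φ y ∈ Set.range ι) := by
    rintro x y ⟨p⟩
    induction p with
    | nil => rfl
    | cons h _ ih => exact (hadj _ _ h).trans ih
  by_contra! hcon
  have hT : ∀ c : F.ConnectedComponent, (∀ x ∈ c.supp, φ x ∈ Set.range ι) →
      Contains T (SimpleGraph.induce c.supp F) := by
    intro c hc
    by_contra hcT
    choose g hg using fun x : c.supp => hc x x.2
    refine hcon c hcT ⟨⟨g, fun x y hxy => ?_⟩, fun a b hab => hD _ _ ?_⟩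
    · exact Subtype.ext (φ.injective (by rw [← hg x, ← hg y, hxy]))
    · change G.Adj (ι (g a)) (ι (g b))
      rw [hg, hg]
      exact hφ _ _ hab
  choose f hf using hT
  have hc : ∀ x, φ x ∈ Set.range ι → ∀ y ∈ (F.connectedComponentMk x).supp, φ y ∈ Set.range ι :=
    fun x hx y hy => (hreach y x (ConnectedComponent.exact hy)).2 hx
  let g : ∀ x, φ x ∈ Set.range ι → β := fun x hx => f (F.connectedComponentMk x) (hc x hx) ⟨x, rfl⟩
  have hg : ∀ c h x (hxc : F.connectedComponentMk x = c) hx, g x hx = f c h ⟨x, hxc⟩ := by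
    rintro c h x rfl hx
    rfl
  let e : α ⊕ Fin k × β → α ⊕ Fin (k + n) × β := Sum.map id (Prod.map (Fin.castAdd n) id)
  have he : Function.Injective e :=
    Function.injective_id.sumMap ((Fin.castAdd_injective k n).prodMap Function.injective_id)
  have hne : ∀ z i b, e z ≠ Sum.inr (Fin.natAdd k i, b) := by
    rintro (a | ⟨j, b'⟩) i b h
    · simp [e] at h
    · simp only [e, Sum.map_inr, Prod.map_apply, Sum.inr.injEq, Prod.mk.injEq, Fin.ext_iff,
        Fin.val_castAdd, Fin.val_natAdd] at h
      omega
  have headj : ∀ z w, (unionCopies H k T).Adj z w → (unionCopies H (k + n) T).Adj (e z) (e w) := by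
    rintro (a | x) (b | y) h
    · exact unionCopies_adj_inl_inl.2 (unionCopies_adj_inl_inl.1 h)
    · exact absurd h not_unionCopies_adj_inl_inr
    · exact absurd h not_unionCopies_adj_inr_inl
    · obtain ⟨h₁, h₂⟩ := unionCopies_adj_inr_inr.1 h
      exact unionCopies_adj_inr_inr.2 ⟨congrArg (Fin.castAdd n) h₁, h₂⟩
  let ψ : Fin n → α ⊕ Fin (k + n) × β := fun x =>
    if hx : φ x ∈ Set.range ι then Sum.inr (Fin.natAdd k (F.connectedComponentMk x).out, g x hx)
    else e (φ x)
  have hψ_in : ∀ x hx, ψ x = Sum.inr (Fin.natAdd k (F.connectedComponentMk x).out, g x hx) :=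
    fun x hx => dif_pos hx
  have hψ_out : ∀ x, φ x ∉ Set.range ι → ψ x = e (φ x) := fun x hx => dif_neg hx
  refine hnot ⟨⟨ψ, fun x y hxy => ?_⟩, fun x y hxy => ?_⟩
  · by_cases hx : φ x ∈ Set.range ι <;> by_cases hy : φ y ∈ Set.range ι
    · rw [hψ_in x hx, hψ_in y hy, Sum.inr.injEq, Prod.mk.injEq] at hxy
      have hout_eq := Fin.natAdd_injective n k hxy.1
      have hmk : F.connectedComponentMk x = F.connectedComponentMk y := by
        rw [← Quot.out_eq (F.connectedComponentMk x), ← Quot.out_eq (F.connectedComponentMk y)]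
        exact congrArg _ hout_eq
      have := hxy.2
      rw [hg _ (hc y hy) x hmk hx, hg _ (hc y hy) y rfl hy] at this
      exact congrArg Subtype.val ((f _ _).injective this)
    · rw [hψ_in x hx, hψ_out y hy] at hxy
      exact absurd hxy.symm (hne _ _ _)
    · rw [hψ_out x hx, hψ_in y hy] at hxy
      exact absurd hxy (hne _ _ _)
    · rw [hψ_out x hx, hψ_out y hy] at hxy
      exact φ.injective (he hxy)
  · change (unionCopies H (k + n) T).Adj (ψ x) (ψ y)
    by_cases hx : φ x ∈ Set.range ι
    · have hy := (hadj x y hxy).1 hx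
      have hmk : F.connectedComponentMk x = F.connectedComponentMk y :=
        ConnectedComponent.sound hxy.reachable
      rw [hψ_in x hx, hψ_in y hy, unionCopies_adj_inr_inr, hmk]
      refine ⟨rfl, ?_⟩
      simp only [hg _ (hc y hy) x hmk hx, hg _ (hc y hy) y rfl hy]
      exact hf _ _ _ _ hxy
    · rw [hψ_out x hx, hψ_out y fun hy => hx ((hadj x y hxy).2 hy)]
      exact headj _ _ (hout _ _ hx (hφ x y hxy))

/-- If `(H,T)` is an `F`-saturated blueprint (`T` a tree, `H ∪ kT` `F`-saturated for all large
`k`), then every `T+e` and every `2T+e` contains a connected component of `F` that is not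
contained in `T`. -/
theorem stmt18 {nF t nH : ℕ} (F : SimpleGraph (Fin nF)) (hF : 1 ≤ Nat.card F.edgeSet)
    (T : SimpleGraph (Fin t)) (hT : T.IsTree) (H : SimpleGraph (Fin nH))
    (hbp : ∃ K : ℕ, ∀ k : ℕ, K ≤ k → SatSingle F (unionCopies H k T)) :
    (∀ u v : Fin t, u ≠ v → ¬ T.Adj u v →
      ∃ c : F.ConnectedComponent, ¬ Contains T (SimpleGraph.induce c.supp F) ∧
        Contains (T ⊔ SimpleGraph.fromEdgeSet {s(u, v)}) (SimpleGraph.induce c.supp F)) ∧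
    (∀ u v : Fin t,
      ∃ c : F.ConnectedComponent, ¬ Contains T (SimpleGraph.induce c.supp F) ∧
        Contains (disjUnionG T T ⊔
            SimpleGraph.fromEdgeSet {s((Sum.inl u : Fin t ⊕ Fin t), (Sum.inr v : Fin t ⊕ Fin t))})
          (SimpleGraph.induce c.supp F)) := by
  obtain ⟨K, hK⟩ := hbp
  have hnot := (hK (K + 2 + nF) (by omega)).1
  refine ⟨fun u v huv hadj => ?_, fun u v => ?_⟩
  · have hsat := (hK (K + 2) (by omega)).2 (Sum.inr (0, u)) (Sum.inr (0, v)) (by simpa using huv)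
      (fun h => hadj (unionCopies_adj_inr_inr.1 h).2)
    refine exists_component_contains_of_contains (fun b => Sum.inr (0, b)) ?_ ?_ ?_ hsat hnot
    · intro x y h
      simpa [unionCopies_adj_inr_inr] using h
    · rintro x (a | ⟨i, b⟩) h
      · simp [not_unionCopies_adj_inr_inl] at h
      · simp only [sup_adj, unionCopies_adj_inr_inr, fromEdgeSet_adj, Set.mem_singleton_iff,
          Sym2.eq_iff, Sum.inr.injEq, Prod.mk.injEq] at h
        have hi : i = 0 := by grind
        exact ⟨b, by rw [hi]⟩
    · intro x y hx h
      simp only [sup_adj, fromEdgeSet_adj, Set.mem_singleton_iff, Sym2.eq_iff] at h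
      rcases h with h | ⟨⟨rfl, rfl⟩ | ⟨rfl, rfl⟩, -⟩
      · exact h
      · exact absurd ⟨u, rfl⟩ hx
      · exact absurd ⟨v, rfl⟩ hx
  · have h01 : (0 : Fin (K + 2)) ≠ 1 := by simp
    have hsat := (hK (K + 2) (by omega)).2 (Sum.inr (0, u)) (Sum.inr (1, v))
      (by simp) (fun h => h01 (unionCopies_adj_inr_inr.1 h).1)
    refine exists_component_contains_of_contains
      (Sum.elim (fun b => Sum.inr (0, b)) (fun b => Sum.inr (1, b))) ?_ ?_ ?_ hsat hnot
    · rintro (x | x) (y | y) h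
      · simpa [unionCopies_adj_inr_inr, disjUnionG_adj_inl_inl] using h
      · exact Or.inr (by simpa [unionCopies_adj_inr_inr] using h)
      · exact Or.inr (by simpa [unionCopies_adj_inr_inr] using h)
      · simpa [unionCopies_adj_inr_inr, disjUnionG_adj_inr_inr] using h
    · rintro x (a | ⟨i, b⟩) h
      · rcases x with x | x <;> simp [not_unionCopies_adj_inr_inl] at h
      · have hi : i = 0 ∨ i = 1 := by
          rcases x with x | x <;>
          · simp only [Sum.elim_inl, Sum.elim_inr, sup_adj, unionCopies_adj_inr_inr,
              fromEdgeSet_adj, Set.mem_singleton_iff, Sym2.eq_iff, Sum.inr.injEq,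
              Prod.mk.injEq] at h
            grind
        rcases hi with rfl | rfl
        · exact ⟨Sum.inl b, rfl⟩
        · exact ⟨Sum.inr b, rfl⟩
    · intro x y hx h
      simp only [sup_adj, fromEdgeSet_adj, Set.mem_singleton_iff, Sym2.eq_iff] at h
      rcases h with h | ⟨⟨rfl, rfl⟩ | ⟨rfl, rfl⟩, -⟩
      · exact h
      · exact absurd ⟨Sum.inl u, rfl⟩ hx
      · exact absurd ⟨Sum.inr v, rfl⟩ hx
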